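/- Suppose n is even. Let M be a matching of maximum weight among all matchings of size n/3 in G, and let N be a matching of maximum weight among all matchings of size n/2 in G. Define B1 = (2/3)·w(N) + (1/2)·OPT − (1/2)·Σ_{xyz ∈ P*} max{w(xy), w(yz)}; B2 = (2/3)·w(M) + (1/12)·w(M'_1) + (1/6)·w(M''_1) + (1/4)·w(M'''_1) + (1/6)·w(M_2) + (1/4)·w(M_3) + (1/3)·w(M_4) + (1/2)·w(X_2) + (1/2)·w(X_3) + (1/2)·w(X_4) + w(X_5) + (1/2)·w(X_7) − (1/4)·w(Y_7) + (1/4)·w(P*_6) + (1/4)·w(P*_8); B3 = (4/9)·(2·w(Y_5) + 2·w(Y_6) + w(P*_7) + w(P*_8) + Σ_{xyz ∈ P*_7 ∪ P*_8} max{w(xy), w(yz)}). Then max{B1, B2, B3} ≥ (10/17)·OPT. -/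

import Mathlib

open Finset
open scoped Classical

namespace MW3PP

/-- A 3-path `xyz`: a path on three distinct vertices with middle vertex `y`. -/
structure P3 (V : Type*) where
  x : V
  y : V
  z : V
  hxy : x ≠ y
  hyz : y ≠ z
  hxz : x ≠ z

variable {V : Type*} [Fintype V] [DecidableEq V]

/-- The vertex set of a 3-path. -/
def P3.verts (p : P3 V) : Finset V := {p.x, p.y, p.z}

/-- The two edges of a 3-path. -/
def P3.edges (p : P3 V) : Finset (Sym2 V) := {s(p.x, p.y), s(p.y, p.z)}

/-- The weight of a 3-path. -/
def P3.wt (w : Sym2 V → ℝ) (p : P3 V) : ℝ := w s(p.x, p.y) + w s(p.y, p.z)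

/-- The total weight of a set of edges. -/
def ew (w : Sym2 V → ℝ) (F : Finset (Sym2 V)) : ℝ := ∑ e ∈ F, w e

/-- The total weight of a set of 3-paths. -/
def pw (w : Sym2 V → ℝ) (P : Finset (P3 V)) : ℝ := ∑ p ∈ P, p.wt w

/-- `∑_{xyz ∈ S} max (w (xy)) (w (yz))`. -/
def maxSum (w : Sym2 V → ℝ) (S : Finset (P3 V)) : ℝ :=
  ∑ p ∈ S, max (w s(p.x, p.y)) (w s(p.y, p.z))

/-- A perfect 3-path packing: `n/3` pairwise vertex-disjoint 3-paths covering all vertices. -/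
def IsPacking (P : Finset (P3 V)) : Prop :=
  P.card = Fintype.card V / 3 ∧
  (∀ p ∈ P, ∀ q ∈ P, p ≠ q → Disjoint p.verts q.verts) ∧
  (∀ v : V, ∃ p ∈ P, v ∈ p.verts)

/-- A maximum-weight perfect 3-path packing. -/
def IsMaxPacking (w : Sym2 V → ℝ) (P : Finset (P3 V)) : Prop :=
  IsPacking P ∧ ∀ Q : Finset (P3 V), IsPacking Q → pw w Q ≤ pw w P

/-- A matching: a set of pairwise vertex-disjoint (non-loop) edges. -/
def IsMatching (M : Finset (Sym2 V)) : Prop :=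
  (∀ e ∈ M, ¬ e.IsDiag) ∧
  ∀ e ∈ M, ∀ f ∈ M, e ≠ f → ∀ v : V, v ∈ e → v ∉ f

/-- A maximum-weight matching among all matchings of size `k`. -/
def IsMaxMatchingOfSize (w : Sym2 V → ℝ) (k : ℕ) (M : Finset (Sym2 V)) : Prop :=
  IsMatching M ∧ M.card = k ∧
  ∀ M' : Finset (Sym2 V), IsMatching M' → M'.card = k → ew w M' ≤ ew w M

/-- `v ∈ V(M)` : vertex `v` is covered by the matching `M`. -/
def covered (M : Finset (Sym2 V)) (v : V) : Prop := ∃ e ∈ M, v ∈ e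

/-- `e_u` : the edge of `M` containing `u` (junk value if there is none). -/
noncomputable def eMatch (M : Finset (Sym2 V)) (u : V) : Sym2 V :=
  if h : ∃ e ∈ M, u ∈ e then h.choose else s(u, u)

/-- The cost `c` of an edge with respect to a matching `M`:
`c(uv) = w(uv) - min (w (e_u)) (w (e_v))` if both endpoints are covered by `M`,
and `c(uv) = w(uv)` otherwise. -/
noncomputable def cost (w : Sym2 V → ℝ) (M : Finset (Sym2 V)) : Sym2 V → ℝ :=
  Sym2.lift ⟨fun u v =>
    if covered M u ∧ covered M v then
      w s(u, v) - min (w (eMatch M u)) (w (eMatch M v))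
    else w s(u, v), by
      intro u v
      dsimp only
      by_cases h : covered M u ∧ covered M v
      · rw [if_pos h, if_pos (show covered M v ∧ covered M u from ⟨h.2, h.1⟩),
          Sym2.eq_swap, min_comm]
      · rw [if_neg h, if_neg (show ¬(covered M v ∧ covered M u) from fun h' => h ⟨h'.2, h'.1⟩),
          Sym2.eq_swap]⟩

/-- The total cost of a set of edges. -/
noncomputable def cw (w : Sym2 V → ℝ) (M F : Finset (Sym2 V)) : ℝ := ∑ e ∈ F, cost w M e

/-- The number of vertices of the 3-path `p` covered by `M`. -/
noncomputable def kcnt (M : Finset (Sym2 V)) (p : P3 V) : ℕ :=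
  (p.verts.filter fun v => covered M v).card

/-- Exactly one of the two edges of `p` lies in `M`. -/
def exOne (M : Finset (Sym2 V)) (p : P3 V) : Prop :=
  (s(p.x, p.y) ∈ M ∧ s(p.y, p.z) ∉ M) ∨ (s(p.x, p.y) ∉ M ∧ s(p.y, p.z) ∈ M)

def cls1 (M : Finset (Sym2 V)) (p : P3 V) : Prop := kcnt M p = 0
def cls2 (M : Finset (Sym2 V)) (p : P3 V) : Prop := kcnt M p = 1 ∧ ¬ covered M p.y
def cls3 (M : Finset (Sym2 V)) (p : P3 V) : Prop := kcnt M p = 1 ∧ covered M p.y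
def cls4 (M : Finset (Sym2 V)) (p : P3 V) : Prop := kcnt M p = 2 ∧ ¬ covered M p.y
def cls5 (M : Finset (Sym2 V)) (p : P3 V) : Prop := kcnt M p = 2 ∧ covered M p.y ∧ exOne M p
def cls6 (M : Finset (Sym2 V)) (p : P3 V) : Prop :=
  kcnt M p = 2 ∧ covered M p.y ∧ s(p.x, p.y) ∉ M ∧ s(p.y, p.z) ∉ M
def cls7 (M : Finset (Sym2 V)) (p : P3 V) : Prop := kcnt M p = 3 ∧ exOne M p
def cls8 (M : Finset (Sym2 V)) (p : P3 V) : Prop :=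
  kcnt M p = 3 ∧ s(p.x, p.y) ∉ M ∧ s(p.y, p.z) ∉ M

/-- The subset of a set of 3-paths satisfying a predicate. -/
noncomputable def psel (P : Finset (P3 V)) (c : P3 V → Prop) : Finset (P3 V) := P.filter c

/-- The set of all edges of the 3-paths in `S`. -/
def Esub (S : Finset (P3 V)) : Finset (Sym2 V) := S.biUnion P3.edges

/-- The heaviest edge of a 3-path (the edge `xy` in case of a tie). -/
noncomputable def heavy (w : Sym2 V → ℝ) (p : P3 V) : Sym2 V :=
  if w s(p.y, p.z) ≤ w s(p.x, p.y) then s(p.x, p.y) else s(p.y, p.z)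

noncomputable def X1 (w : Sym2 V → ℝ) (P : Finset (P3 V)) (M : Finset (Sym2 V)) :
    Finset (Sym2 V) := (psel P (cls1 M)).image (heavy w)
noncomputable def X2 (P : Finset (P3 V)) (M : Finset (Sym2 V)) : Finset (Sym2 V) :=
  (psel P (cls2 M)).image fun p => if covered M p.x then s(p.x, p.y) else s(p.y, p.z)
noncomputable def X3 (w : Sym2 V → ℝ) (P : Finset (P3 V)) (M : Finset (Sym2 V)) :
    Finset (Sym2 V) := (psel P (cls3 M)).image (heavy w)
noncomputable def X4 (w : Sym2 V → ℝ) (P : Finset (P3 V)) (M : Finset (Sym2 V)) :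
    Finset (Sym2 V) := (psel P (cls4 M)).image (heavy w)
noncomputable def X5 (P : Finset (P3 V)) (M : Finset (Sym2 V)) : Finset (Sym2 V) :=
  (psel P (cls5 M)).image fun p => if s(p.x, p.y) ∈ M then s(p.y, p.z) else s(p.x, p.y)
noncomputable def X6 (P : Finset (P3 V)) (M : Finset (Sym2 V)) : Finset (Sym2 V) :=
  (psel P (cls6 M)).image fun p => if covered M p.x then s(p.y, p.z) else s(p.x, p.y)
noncomputable def X7 (P : Finset (P3 V)) (M : Finset (Sym2 V)) : Finset (Sym2 V) :=
  (psel P (cls7 M)).image fun p => if s(p.x, p.y) ∈ M then s(p.y, p.z) else s(p.x, p.y)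
noncomputable def X8 (w : Sym2 V → ℝ) (P : Finset (P3 V)) (M : Finset (Sym2 V)) :
    Finset (Sym2 V) := (psel P (cls8 M)).image (heavy w)

noncomputable def Y1 (w : Sym2 V → ℝ) (P : Finset (P3 V)) (M : Finset (Sym2 V)) :
    Finset (Sym2 V) := Esub (psel P (cls1 M)) \ X1 w P M
noncomputable def Y2 (P : Finset (P3 V)) (M : Finset (Sym2 V)) : Finset (Sym2 V) :=
  Esub (psel P (cls2 M)) \ X2 P M
noncomputable def Y3 (w : Sym2 V → ℝ) (P : Finset (P3 V)) (M : Finset (Sym2 V)) :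
    Finset (Sym2 V) := Esub (psel P (cls3 M)) \ X3 w P M
noncomputable def Y4 (w : Sym2 V → ℝ) (P : Finset (P3 V)) (M : Finset (Sym2 V)) :
    Finset (Sym2 V) := Esub (psel P (cls4 M)) \ X4 w P M
noncomputable def Y5 (P : Finset (P3 V)) (M : Finset (Sym2 V)) : Finset (Sym2 V) :=
  Esub (psel P (cls5 M)) \ X5 P M
noncomputable def Y6 (P : Finset (P3 V)) (M : Finset (Sym2 V)) : Finset (Sym2 V) :=
  Esub (psel P (cls6 M)) \ X6 P M
noncomputable def Y7 (P : Finset (P3 V)) (M : Finset (Sym2 V)) : Finset (Sym2 V) :=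
  Esub (psel P (cls7 M)) \ X7 P M
noncomputable def Y8 (w : Sym2 V → ℝ) (P : Finset (P3 V)) (M : Finset (Sym2 V)) :
    Finset (Sym2 V) := Esub (psel P (cls8 M)) \ X8 w P M

/-- An edge is a middle edge (w.r.t. `M`) if exactly one of its endpoints lies in `V(M)`. -/
def isMiddle (M : Finset (Sym2 V)) (e : Sym2 V) : Prop :=
  ∃ u v : V, e = s(u, v) ∧ covered M u ∧ ¬ covered M v

/-- Two edges share a vertex. -/
def shares (e f : Sym2 V) : Prop := ∃ v, v ∈ e ∧ v ∈ f

/-- `g` is a middle edge of some 3-path in `S`. -/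
def middleIn (M : Finset (Sym2 V)) (S : Finset (P3 V)) (g : Sym2 V) : Prop :=
  (∃ p ∈ S, g ∈ p.edges) ∧ isMiddle M g

/-- The 3-paths of `P` lying in classes 2, 3 or 4. -/
noncomputable def P234 (P : Finset (P3 V)) (M : Finset (Sym2 V)) : Finset (P3 V) :=
  psel P fun p => cls2 M p ∨ cls3 M p ∨ cls4 M p

/-- `M_1`: edges of `M` sharing a vertex with at least one middle edge of a 3-path of `P*_6`. -/
noncomputable def Mset1 (P : Finset (P3 V)) (M : Finset (Sym2 V)) : Finset (Sym2 V) :=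
  M.filter fun f => ∃ g, middleIn M (psel P (cls6 M)) g ∧ shares f g

/-- `M_2`: edges of `M` sharing a vertex with at least one middle edge, all middle edges met
belonging to 3-paths of `P*_2 ∪ P*_3 ∪ P*_4`. -/
noncomputable def Mset2 (P : Finset (P3 V)) (M : Finset (Sym2 V)) : Finset (Sym2 V) :=
  M.filter fun f =>
    (∃ g, middleIn M P g ∧ shares f g) ∧
    ∀ g, middleIn M P g → shares f g → middleIn M (P234 P M) g

/-- `M_3 = M ∩ E(P*_7)`. -/
noncomputable def Mset3 (P : Finset (P3 V)) (M : Finset (Sym2 V)) : Finset (Sym2 V) :=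
  M ∩ Esub (psel P (cls7 M))

/-- `M_4 = M ∩ E(P*_5)`. -/
noncomputable def Mset4 (P : Finset (P3 V)) (M : Finset (Sym2 V)) : Finset (Sym2 V) :=
  M ∩ Esub (psel P (cls5 M))

/-- The middle edges of 3-paths of `P*_6`. -/
noncomputable def mid6 (P : Finset (P3 V)) (M : Finset (Sym2 V)) : Finset (Sym2 V) :=
  (Esub (psel P (cls6 M))).filter (isMiddle M)

/-- `M'_1`: edges of `M_1` meeting exactly one middle edge of a 3-path of `P*_6` and
no middle edge of a 3-path of `P*_2 ∪ P*_3 ∪ P*_4`. -/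
noncomputable def Mset1' (P : Finset (P3 V)) (M : Finset (Sym2 V)) : Finset (Sym2 V) :=
  (Mset1 P M).filter fun f =>
    ((mid6 P M).filter fun g => shares f g).card = 1 ∧
    ∀ g, middleIn M (P234 P M) g → ¬ shares f g

/-- `M''_1`: edges of `M_1` meeting two middle edges of 3-paths of `P*_6`. -/
noncomputable def Mset1'' (P : Finset (P3 V)) (M : Finset (Sym2 V)) : Finset (Sym2 V) :=
  (Mset1 P M).filter fun f => ((mid6 P M).filter fun g => shares f g).card = 2

/-- `M'''_1`: edges of `M_1` meeting exactly one middle edge of a 3-path of `P*_6` and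
at least one middle edge of a 3-path of `P*_2 ∪ P*_3 ∪ P*_4`. -/
noncomputable def Mset1''' (P : Finset (P3 V)) (M : Finset (Sym2 V)) : Finset (Sym2 V) :=
  (Mset1 P M).filter fun f =>
    ((mid6 P M).filter fun g => shares f g).card = 1 ∧
    ∃ g, middleIn M (P234 P M) g ∧ shares f g

/-- Assumption on `P*`: for every 3-path `xyz ∈ P*` with `y ∉ V(M)` and `x, z ∈ V(M)`,
the vertices `x` and `z` lie in two distinct edges of `M`. -/
def Ass (P : Finset (P3 V)) (M : Finset (Sym2 V)) : Prop :=
  ∀ p ∈ P, ¬ covered M p.y → covered M p.x → covered M p.z →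
    ∃ e ∈ M, ∃ f ∈ M, p.x ∈ e ∧ p.z ∈ f ∧ e ≠ f

/-- An admissible edge w.r.t. `M`: either both endpoints are in `V(M)` and lie in two distinct
edges of `M`, or exactly one endpoint is in `V(M)`. -/
def goodEdge (M : Finset (Sym2 V)) (e : Sym2 V) : Prop :=
  (∃ u v : V, e = s(u, v) ∧ covered M u ∧ covered M v ∧ ∀ f ∈ M, ¬(u ∈ f ∧ v ∈ f)) ∨
  (∃ u v : V, e = s(u, v) ∧ covered M u ∧ ¬ covered M v)

set_option linter.unusedSectionVars false

/-! ### Matchings -/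

theorem IsMatching.eq_of_mem {M : Finset (Sym2 V)} (hM : IsMatching M) {e f : Sym2 V} {v : V}
    (he : e ∈ M) (hf : f ∈ M) (hve : v ∈ e) (hvf : v ∈ f) : e = f := by
  by_contra h
  exact hM.2 e he f hf h v hve hvf

theorem IsMatching.subset {M F : Finset (Sym2 V)} (hM : IsMatching M) (h : F ⊆ M) :
    IsMatching F :=
  ⟨fun e he => hM.1 e (h he), fun e he f hf => hM.2 e (h he) f (h hf)⟩

theorem IsMatching.union {F H : Finset (Sym2 V)} (hF : IsMatching F) (hH : IsMatching H)
    (hd : ∀ e ∈ F, ∀ f ∈ H, ∀ v, v ∈ e → v ∉ f) : IsMatching (F ∪ H) := by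
  refine ⟨fun e he => ?_, fun e he f hf hne v hve hvf => ?_⟩
  · rcases Finset.mem_union.1 he with h | h
    exacts [hF.1 e h, hH.1 e h]
  · rcases Finset.mem_union.1 he with h | h <;> rcases Finset.mem_union.1 hf with h' | h'
    · exact hF.2 e h f h' hne v hve hvf
    · exact hd e h f h' v hve hvf
    · exact hd f h' e h v hvf hve
    · exact hH.2 e h f h' hne v hve hvf

theorem isMatching_singleton {u v : V} (h : u ≠ v) : IsMatching ({s(u, v)} : Finset (Sym2 V)) := by
  refine ⟨fun e he => ?_, fun e he f hf hne => ?_⟩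
  · rw [Finset.mem_singleton.1 he]
    simpa using h
  · rw [Finset.mem_singleton.1 he, Finset.mem_singleton.1 hf] at hne
    exact absurd rfl hne

theorem IsMatching.card_covered {F : Finset (Sym2 V)} (hF : IsMatching F) :
    (Finset.univ.filter fun v => covered F v).card = 2 * F.card := by
  have h1 : (Finset.univ.filter fun v => covered F v) = F.biUnion Sym2.toFinset := by
    ext v
    rw [Finset.mem_filter]
    simp [covered]
  rw [h1, Finset.card_biUnion, Finset.sum_congr rfl
    (fun e he => Sym2.card_toFinset_of_not_isDiag e (hF.1 e he))]
  · simp [mul_comm]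
  · intro e he f hf hne
    rw [Function.onFun, Finset.disjoint_left]
    intro v hv hv'
    exact hF.2 e he f hf hne v (Sym2.mem_toFinset.1 hv) (Sym2.mem_toFinset.1 hv')

theorem IsMatching.two_mul_card_le {F : Finset (Sym2 V)} (hF : IsMatching F) :
    2 * F.card ≤ Fintype.card V := by
  rw [← hF.card_covered]
  exact Finset.card_le_univ _

theorem IsMatching.exists_extension {F : Finset (Sym2 V)} (hF : IsMatching F) {k : ℕ}
    (hk : F.card ≤ k) (hV : 2 * k ≤ Fintype.card V) :
    ∃ F' : Finset (Sym2 V), IsMatching F' ∧ F'.card = k ∧ F ⊆ F' := by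
  induction k, hk using Nat.le_induction with
  | base => exact ⟨F, hF, rfl, Finset.Subset.refl _⟩
  | succ k hk ih =>
    obtain ⟨F', hF', hc, hs⟩ := ih (by omega)
    have h1 := hF'.card_covered
    have h2 : (Finset.univ.filter fun v => covered F' v).card +
        (Finset.univ.filter fun v => ¬ covered F' v).card = Fintype.card V :=
      Finset.card_filter_add_card_filter_not _
    obtain ⟨u, hu, v, hv, huv⟩ := Finset.one_lt_card.1
      (show 1 < (Finset.univ.filter fun v => ¬ covered F' v).card by omega)
    have hu : ¬ covered F' u := (Finset.mem_filter.1 hu).2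
    have hv : ¬ covered F' v := (Finset.mem_filter.1 hv).2
    have hn : s(u, v) ∉ F' := fun h => hu ⟨_, h, Sym2.mem_mk_left u v⟩
    refine ⟨F' ∪ {s(u, v)}, hF'.union (isMatching_singleton huv) ?_, ?_, ?_⟩
    · intro e he f hf t hte htf
      rw [Finset.mem_singleton.1 hf, Sym2.mem_iff] at htf
      rcases htf with rfl | rfl
      exacts [hu ⟨e, he, hte⟩, hv ⟨e, he, hte⟩]
    · rw [Finset.card_union_of_disjoint (by simpa using hn), hc, Finset.card_singleton]
    · exact hs.trans Finset.subset_union_left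

theorem IsMaxMatchingOfSize.ew_le {w : Sym2 V → ℝ} (hw : ∀ e, 0 ≤ w e) {k : ℕ}
    {M : Finset (Sym2 V)} (hM : IsMaxMatchingOfSize w k M) {F : Finset (Sym2 V)}
    (hF : IsMatching F) (hk : F.card ≤ k) : ew w F ≤ ew w M := by
  obtain ⟨F', hF', hc, hs⟩ := hF.exists_extension hk (hM.2.1 ▸ hM.1.two_mul_card_le)
  exact (Finset.sum_le_sum_of_subset_of_nonneg hs fun e _ _ => hw e).trans (hM.2.2 F' hF' hc)

/-- Exchanging the matching edge at the covered end of a middle edge does not gain weight. -/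
theorem IsMaxMatchingOfSize.le_of_shares {w : Sym2 V → ℝ} {k : ℕ}
    {M : Finset (Sym2 V)} (hM : IsMaxMatchingOfSize w k M) {e g : Sym2 V} (he : e ∈ M)
    (hg : isMiddle M g) (hs : shares e g) : w g ≤ w e := by
  obtain ⟨u, v, rfl, hu, hv⟩ := hg
  have hue : u ∈ e := by
    obtain ⟨t, hte, htg⟩ := hs
    rcases Sym2.mem_iff.1 htg with rfl | rfl
    exacts [hte, absurd ⟨e, he, hte⟩ hv]
  have hgM : s(u, v) ∉ M.erase e :=
    fun h => hv ⟨_, Finset.mem_of_mem_erase h, Sym2.mem_mk_right u v⟩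
  have huv : u ≠ v := fun h => hv (h ▸ hu)
  have hmatch : IsMatching (M.erase e ∪ {s(u, v)}) := by
    refine (hM.1.subset (Finset.erase_subset _ _)).union (isMatching_singleton huv) ?_
    intro f hf f' hf' t htf htf'
    rw [Finset.mem_singleton.1 hf', Sym2.mem_iff] at htf'
    rcases htf' with rfl | rfl
    · exact (Finset.mem_erase.1 hf).1 (hM.1.eq_of_mem (Finset.mem_erase.1 hf).2 he htf hue)
    · exact hv ⟨f, Finset.mem_of_mem_erase hf, htf⟩
  have hd : Disjoint (M.erase e) {s(u, v)} := by
    rwa [Finset.disjoint_singleton_right]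
  have hcard : (M.erase e ∪ {s(u, v)}).card = k := by
    rw [Finset.card_union_of_disjoint hd, Finset.card_singleton, Finset.card_erase_add_one he,
      hM.2.1]
  have h := hM.2.2 _ hmatch hcard
  have h' := Finset.sum_erase_add M w he
  unfold ew at h
  rw [Finset.sum_union hd, Finset.sum_singleton] at h
  linarith

/-- The edge of `M` sharing a vertex with `g` (`g` itself if there is none). -/
noncomputable def partner (M : Finset (Sym2 V)) (g : Sym2 V) : Sym2 V :=
  if h : ∃ e ∈ M, shares e g then h.choose else g

theorem partner_mem {M : Finset (Sym2 V)} {g : Sym2 V} (hg : isMiddle M g) :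
    partner M g ∈ M ∧ shares (partner M g) g := by
  have h : ∃ e ∈ M, shares e g := by
    obtain ⟨u, v, rfl, ⟨e, he, hue⟩, -⟩ := hg
    exact ⟨e, he, u, hue, Sym2.mem_mk_left u v⟩
  rw [partner, dif_pos h]
  exact h.choose_spec

theorem eq_partner {M : Finset (Sym2 V)} (hM : IsMatching M) {e g : Sym2 V} (hg : isMiddle M g)
    (he : e ∈ M) (hs : shares e g) : partner M g = e := by
  obtain ⟨hp, t', ht', htg'⟩ := partner_mem hg
  obtain ⟨t, hte, htg⟩ := hs
  obtain ⟨u, v, rfl, hu, hv⟩ := hg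
  rcases Sym2.mem_iff.1 htg with rfl | rfl
  · rcases Sym2.mem_iff.1 htg' with rfl | rfl
    · exact hM.eq_of_mem hp he ht' hte
    · exact absurd ⟨_, hp, ht'⟩ hv
  · exact absurd ⟨_, he, hte⟩ hv

/-! ### Edges of 3-paths -/

theorem P3.mem_edges {p : P3 V} {e : Sym2 V} :
    e ∈ p.edges ↔ e = s(p.x, p.y) ∨ e = s(p.y, p.z) := by
  simp [P3.edges]

theorem P3.mem_verts {p : P3 V} {v : V} : v ∈ p.verts ↔ v = p.x ∨ v = p.y ∨ v = p.z := by
  simp [P3.verts]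

theorem P3.mem_verts_of_mem_edges {p : P3 V} {e : Sym2 V} {v : V} (he : e ∈ p.edges)
    (hv : v ∈ e) : v ∈ p.verts := by
  rw [P3.mem_verts]
  rcases P3.mem_edges.1 he with rfl | rfl <;> rcases Sym2.mem_iff.1 hv with rfl | rfl <;> simp

theorem P3.edge_ne (p : P3 V) : s(p.x, p.y) ≠ s(p.y, p.z) := by
  intro h
  rcases Sym2.eq_iff.1 h with ⟨h1, -⟩ | ⟨h1, -⟩
  exacts [p.hxy h1, p.hxz h1]

theorem P3.not_isDiag_of_mem_edges {p : P3 V} {e : Sym2 V} (he : e ∈ p.edges) : ¬ e.IsDiag := by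
  rcases P3.mem_edges.1 he with rfl | rfl
  · simpa using p.hxy
  · simpa using p.hyz

theorem heavy_mem_edges (w : Sym2 V → ℝ) (p : P3 V) : heavy w p ∈ p.edges := by
  rw [P3.mem_edges]
  unfold heavy
  split_ifs <;> simp

theorem weight_heavy (w : Sym2 V → ℝ) (p : P3 V) :
    w (heavy w p) = max (w s(p.x, p.y)) (w s(p.y, p.z)) := by
  unfold heavy
  split_ifs with h
  · rw [max_eq_left h]
  · rw [max_eq_right (not_le.1 h).le]

theorem le_max_of_mem_edges (w : Sym2 V → ℝ) {p : P3 V} {e : Sym2 V} (he : e ∈ p.edges) :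
    w e ≤ max (w s(p.x, p.y)) (w s(p.y, p.z)) := by
  rcases P3.mem_edges.1 he with rfl | rfl
  exacts [le_max_left _ _, le_max_right _ _]

theorem wt_sub_le_max_of_mem_edges (w : Sym2 V → ℝ) {p : P3 V} {e : Sym2 V} (he : e ∈ p.edges) :
    p.wt w - w e ≤ max (w s(p.x, p.y)) (w s(p.y, p.z)) := by
  unfold P3.wt
  rcases P3.mem_edges.1 he with rfl | rfl
  · linarith [le_max_right (w s(p.x, p.y)) (w s(p.y, p.z))]
  · linarith [le_max_left (w s(p.x, p.y)) (w s(p.y, p.z))]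

/-- A family of pairwise vertex-disjoint 3-paths. -/
def PairwiseDisj (P : Finset (P3 V)) : Prop :=
  ∀ p ∈ P, ∀ q ∈ P, p ≠ q → Disjoint p.verts q.verts

theorem PairwiseDisj.subset {P Q : Finset (P3 V)} (hP : PairwiseDisj P) (h : Q ⊆ P) :
    PairwiseDisj Q :=
  fun p hp q hq => hP p (h hp) q (h hq)

theorem mem_psel {P : Finset (P3 V)} {c : P3 V → Prop} {p : P3 V} :
    p ∈ psel P c ↔ p ∈ P ∧ c p := by
  simp [psel]

theorem PairwiseDisj.psel {P : Finset (P3 V)} (hP : PairwiseDisj P) (c : P3 V → Prop) :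
    PairwiseDisj (psel P c) :=
  hP.subset (Finset.filter_subset _ _)

theorem PairwiseDisj.eq_of_mem {P : Finset (P3 V)} (hP : PairwiseDisj P) {p q : P3 V}
    (hp : p ∈ P) (hq : q ∈ P) {v : V} (hvp : v ∈ p.verts) (hvq : v ∈ q.verts) : p = q := by
  by_contra h
  exact Finset.disjoint_left.1 (hP p hp q hq h) hvp hvq

theorem PairwiseDisj.eq_of_mem_edges {P : Finset (P3 V)} (hP : PairwiseDisj P) {p q : P3 V}
    (hp : p ∈ P) (hq : q ∈ P) {e : Sym2 V} (hep : e ∈ p.edges) (heq : e ∈ q.edges) : p = q := by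
  induction e using Sym2.ind with
  | _ a b =>
    exact hP.eq_of_mem hp hq (P3.mem_verts_of_mem_edges hep (Sym2.mem_mk_left a b))
      (P3.mem_verts_of_mem_edges heq (Sym2.mem_mk_left a b))

theorem PairwiseDisj.injOn {P : Finset (P3 V)} (hP : PairwiseDisj P) {g : P3 V → Sym2 V}
    (hg : ∀ p ∈ P, g p ∈ p.edges) : Set.InjOn g P := by
  intro p hp q hq h
  exact hP.eq_of_mem_edges hp hq (hg p hp) (h ▸ hg q hq)

theorem PairwiseDisj.ew_image {P : Finset (P3 V)} (hP : PairwiseDisj P) {g : P3 V → Sym2 V}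
    (hg : ∀ p ∈ P, g p ∈ p.edges) (w : Sym2 V → ℝ) :
    ew w (P.image g) = ∑ p ∈ P, w (g p) :=
  Finset.sum_image (hP.injOn hg)

theorem PairwiseDisj.isMatching_image {P : Finset (P3 V)} (hP : PairwiseDisj P)
    {g : P3 V → Sym2 V} (hg : ∀ p ∈ P, g p ∈ p.edges) : IsMatching (P.image g) := by
  refine ⟨fun e he => ?_, fun e he f hf hne v hve hvf => hne ?_⟩
  · obtain ⟨p, hp, rfl⟩ := Finset.mem_image.1 he
    exact P3.not_isDiag_of_mem_edges (hg p hp)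
  · obtain ⟨p, hp, rfl⟩ := Finset.mem_image.1 he
    obtain ⟨q, hq, rfl⟩ := Finset.mem_image.1 hf
    rw [hP.eq_of_mem hp hq (P3.mem_verts_of_mem_edges (hg p hp) hve)
      (P3.mem_verts_of_mem_edges (hg q hq) hvf)]

theorem PairwiseDisj.ew_Esub {P : Finset (P3 V)} (hP : PairwiseDisj P) (w : Sym2 V → ℝ) :
    ew w (Esub P) = pw w P := by
  unfold ew Esub pw
  rw [Finset.sum_biUnion]
  · refine Finset.sum_congr rfl fun p _ => ?_
    rw [P3.edges, Finset.sum_pair p.edge_ne, P3.wt]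
  · intro p hp q hq hne
    rw [Function.onFun, Finset.disjoint_left]
    exact fun e he he' => hne (hP.eq_of_mem_edges hp hq he he')

theorem PairwiseDisj.ew_Esub_sdiff {P : Finset (P3 V)} (hP : PairwiseDisj P) {g : P3 V → Sym2 V}
    (hg : ∀ p ∈ P, g p ∈ p.edges) (w : Sym2 V → ℝ) :
    ew w (Esub P \ P.image g) + ew w (P.image g) = pw w P := by
  rw [← hP.ew_Esub]
  refine Finset.sum_sdiff ?_
  intro e he
  obtain ⟨p, hp, rfl⟩ := Finset.mem_image.1 he
  exact Finset.mem_biUnion.2 ⟨p, hp, hg p hp⟩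

/-- At most two paths of a vertex-disjoint family meet a given edge. -/
theorem PairwiseDisj.card_le_two {Q : Finset (P3 V)} (hQ : PairwiseDisj Q) {e : Sym2 V}
    (h : ∀ p ∈ Q, ∃ v ∈ p.verts, v ∈ e) : Q.card ≤ 2 := by
  have : Nonempty V := e.inductionOn fun a _ => ⟨a⟩
  choose! v hv hve using h
  calc Q.card ≤ e.toFinset.card := by
        refine Finset.card_le_card_of_injOn v (fun p hp => Sym2.mem_toFinset.2 (hve p hp)) ?_
        intro p hp q hq hpq
        exact hQ.eq_of_mem hp hq (hv p hp) (hpq ▸ hv q hq)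
    _ ≤ 2 := by
        rw [Sym2.card_toFinset]
        split_ifs <;> omega

/-! ### The classes of 3-paths -/

theorem kcnt_eq (M : Finset (Sym2 V)) (p : P3 V) :
    kcnt M p = (if covered M p.x then 1 else 0) + (if covered M p.y then 1 else 0) +
      (if covered M p.z then 1 else 0) := by
  unfold kcnt P3.verts
  rw [Finset.card_filter, Finset.sum_insert (by simp [p.hxy, p.hxz]),
    Finset.sum_insert (by simp [p.hyz]), Finset.sum_singleton, add_assoc]

theorem not_both_mem {M : Finset (Sym2 V)} (hM : IsMatching M) (p : P3 V) :
    ¬ (s(p.x, p.y) ∈ M ∧ s(p.y, p.z) ∈ M) := fun h =>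
  p.edge_ne (hM.eq_of_mem h.1 h.2 (Sym2.mem_mk_right _ _) (Sym2.mem_mk_left _ _))

/-- The eight classes partition the set of 3-paths. -/
theorem sum_eq_sum_classes {M : Finset (Sym2 V)} (hM : IsMatching M) (P : Finset (P3 V))
    (f : P3 V → ℝ) :
    ∑ p ∈ P, f p = ∑ p ∈ psel P (cls1 M), f p + ∑ p ∈ psel P (cls2 M), f p +
      ∑ p ∈ psel P (cls3 M), f p + ∑ p ∈ psel P (cls4 M), f p + ∑ p ∈ psel P (cls5 M), f p +
      ∑ p ∈ psel P (cls6 M), f p + ∑ p ∈ psel P (cls7 M), f p + ∑ p ∈ psel P (cls8 M), f p := by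
  simp only [psel, Finset.sum_filter, ← Finset.sum_add_distrib]
  refine Finset.sum_congr rfl fun p _ => ?_
  have hb := not_both_mem hM p
  simp only [cls1, cls2, cls3, cls4, cls5, cls6, cls7, cls8, exOne, kcnt_eq]
  by_cases hx : covered M p.x <;> by_cases hy : covered M p.y <;> by_cases hz : covered M p.z <;>
  by_cases h1 : s(p.x, p.y) ∈ M <;> by_cases h2 : s(p.y, p.z) ∈ M <;>
  simp_all

theorem sum_psel_or {P : Finset (P3 V)} {c d : P3 V → Prop} (h : ∀ p, c p → ¬ d p)
    (f : P3 V → ℝ) :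
    ∑ p ∈ psel P (fun p => c p ∨ d p), f p = ∑ p ∈ psel P c, f p + ∑ p ∈ psel P d, f p := by
  simp only [psel, Finset.sum_filter, ← Finset.sum_add_distrib]
  refine Finset.sum_congr rfl fun p _ => ?_
  have := h p
  by_cases hc : c p <;> by_cases hd : d p <;> simp_all

theorem cls1_iff {M : Finset (Sym2 V)} {p : P3 V} :
    cls1 M p ↔ ¬ covered M p.x ∧ ¬ covered M p.y ∧ ¬ covered M p.z := by
  rw [cls1, kcnt_eq]
  split_ifs <;> simp_all

theorem cls2_iff {M : Finset (Sym2 V)} {p : P3 V} :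
    cls2 M p ↔ ¬ covered M p.y ∧
      (covered M p.x ∧ ¬ covered M p.z ∨ ¬ covered M p.x ∧ covered M p.z) := by
  rw [cls2, kcnt_eq]
  split_ifs <;> simp_all

theorem cls3_iff {M : Finset (Sym2 V)} {p : P3 V} :
    cls3 M p ↔ ¬ covered M p.x ∧ covered M p.y ∧ ¬ covered M p.z := by
  rw [cls3, kcnt_eq]
  split_ifs <;> simp_all

theorem cls4_iff {M : Finset (Sym2 V)} {p : P3 V} :
    cls4 M p ↔ covered M p.x ∧ ¬ covered M p.y ∧ covered M p.z := by
  rw [cls4, kcnt_eq]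
  split_ifs <;> simp_all

theorem cls6_iff {M : Finset (Sym2 V)} {p : P3 V} :
    cls6 M p ↔ covered M p.y ∧
      (covered M p.x ∧ ¬ covered M p.z ∨ ¬ covered M p.x ∧ covered M p.z) ∧
      s(p.x, p.y) ∉ M ∧ s(p.y, p.z) ∉ M := by
  rw [cls6, kcnt_eq]
  split_ifs <;> simp_all

theorem isMiddle_mk {M : Finset (Sym2 V)} {u v : V} :
    isMiddle M s(u, v) ↔ covered M u ∧ ¬ covered M v ∨ ¬ covered M u ∧ covered M v := by
  constructor
  · rintro ⟨a, b, h, ha, hb⟩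
    rcases Sym2.eq_iff.1 h with ⟨rfl, rfl⟩ | ⟨rfl, rfl⟩
    exacts [Or.inl ⟨ha, hb⟩, Or.inr ⟨hb, ha⟩]
  · rintro (⟨h1, h2⟩ | ⟨h1, h2⟩)
    exacts [⟨u, v, rfl, h1, h2⟩, ⟨v, u, Sym2.eq_swap, h2, h1⟩]

theorem isMiddle_of_cls3_or_cls4 {M : Finset (Sym2 V)} {p : P3 V} (h : cls3 M p ∨ cls4 M p)
    {e : Sym2 V} (he : e ∈ p.edges) : isMiddle M e := by
  rw [cls3_iff, cls4_iff] at h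
  rcases P3.mem_edges.1 he with rfl | rfl <;> rw [isMiddle_mk] <;> tauto

/-- In a path with exactly one covered end, the edge at the uncovered end. -/
noncomputable def oppEdge (M : Finset (Sym2 V)) (p : P3 V) : Sym2 V :=
  if covered M p.x then s(p.y, p.z) else s(p.x, p.y)

theorem oppEdge_mem_edges (M : Finset (Sym2 V)) (p : P3 V) : oppEdge M p ∈ p.edges := by
  rw [P3.mem_edges]
  unfold oppEdge
  split_ifs <;> simp

theorem isMiddle_iff_eq_oppEdge {M : Finset (Sym2 V)} {p : P3 V} (h : cls6 M p) {e : Sym2 V}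
    (he : e ∈ p.edges) : isMiddle M e ↔ e = oppEdge M p := by
  have hne := p.edge_ne
  rw [cls6_iff] at h
  unfold oppEdge
  rcases P3.mem_edges.1 he with rfl | rfl <;> rw [isMiddle_mk] <;> split_ifs <;> simp_all [Ne.symm]

theorem isMiddle_oppEdge {M : Finset (Sym2 V)} {p : P3 V} (h : cls6 M p) :
    isMiddle M (oppEdge M p) :=
  (isMiddle_iff_eq_oppEdge h (oppEdge_mem_edges M p)).2 rfl

/-- In a path of class 5 or 7, an edge not in `M`. -/
noncomputable def edgeOut (M : Finset (Sym2 V)) (p : P3 V) : Sym2 V :=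
  if s(p.x, p.y) ∈ M then s(p.y, p.z) else s(p.x, p.y)

theorem edgeOut_mem_edges (M : Finset (Sym2 V)) (p : P3 V) : edgeOut M p ∈ p.edges := by
  rw [P3.mem_edges]
  unfold edgeOut
  split_ifs <;> simp

theorem Esub_sdiff_subset {M : Finset (Sym2 V)} {Q : Finset (P3 V)} (hQ : ∀ p ∈ Q, exOne M p) :
    Esub Q \ Q.image (edgeOut M) ⊆ M ∩ Esub Q := by
  intro e he
  obtain ⟨he, hx⟩ := Finset.mem_sdiff.1 he
  refine Finset.mem_inter.2 ⟨?_, he⟩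
  obtain ⟨p, hp, hep⟩ := Finset.mem_biUnion.1 he
  by_contra heM
  refine hx (Finset.mem_image.2 ⟨p, hp, ?_⟩)
  unfold edgeOut
  rcases hQ p hp with h | h <;> rcases P3.mem_edges.1 hep with rfl | rfl <;> simp_all

/-- In a path with exactly one covered end, the edge at that end. -/
noncomputable def endEdge (M : Finset (Sym2 V)) (p : P3 V) : Sym2 V :=
  if covered M p.x then s(p.x, p.y) else s(p.y, p.z)

theorem endEdge_mem_edges (M : Finset (Sym2 V)) (p : P3 V) : endEdge M p ∈ p.edges := by
  rw [P3.mem_edges]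
  unfold endEdge
  split_ifs <;> simp

theorem weight_endEdge_add (w : Sym2 V → ℝ) (M : Finset (Sym2 V)) (p : P3 V) :
    w (endEdge M p) + w (oppEdge M p) = p.wt w := by
  unfold endEdge oppEdge P3.wt
  split_ifs <;> ring

theorem not_covered_of_mem_oppEdge {M : Finset (Sym2 V)} {p : P3 V} (h : cls2 M p) {v : V}
    (hv : v ∈ oppEdge M p) : ¬ covered M v := by
  rw [cls2_iff] at h
  unfold oppEdge at hv
  split_ifs at hv <;> rcases Sym2.mem_iff.1 hv with rfl | rfl <;> tauto

/-- A perfect matching obtained from `M` by exchanging the edges in `T` for heavy edges of the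
paths of classes 3 and 4 they meet, and by adding edges of the paths of classes 1 and 2. -/
theorem le_ew_of_isMaxMatchingOfSize {w : Sym2 V → ℝ} (hw : ∀ e, 0 ≤ w e) {M N T : Finset (Sym2 V)}
    {P : Finset (P3 V)} (hP : PairwiseDisj P) (hM : IsMatching M) (hT : T ⊆ M)
    (hN : IsMaxMatchingOfSize w (Fintype.card V / 2) N) :
    ew w M - ew w T + ∑ p ∈ psel P (cls1 M), w (heavy w p) +
      ∑ p ∈ psel P (cls2 M), w (oppEdge M p) +
      ∑ p ∈ psel P (fun p => (cls3 M p ∨ cls4 M p) ∧ partner M (heavy w p) ∈ T), w (heavy w p) ≤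
      ew w N := by
  set g : P3 V → Sym2 V := fun p => if cls2 M p then oppEdge M p else heavy w p with hg
  set S := psel P (fun p => cls1 M p ∨ cls2 M p ∨
    (cls3 M p ∨ cls4 M p) ∧ partner M (heavy w p) ∈ T) with hS
  have hgE : ∀ p, g p ∈ p.edges := by
    intro p
    simp only [hg]
    split_ifs
    exacts [oppEdge_mem_edges M p, heavy_mem_edges w p]
  have hSd : PairwiseDisj S := hP.psel _
  have hd : ∀ e ∈ M \ T, ∀ f ∈ S.image g, ∀ v, v ∈ e → v ∉ f := by
    intro e he f hf v hve hvf
    obtain ⟨heM, heT⟩ := Finset.mem_sdiff.1 he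
    have hv : covered M v := ⟨e, heM, hve⟩
    obtain ⟨p, hp, rfl⟩ := Finset.mem_image.1 hf
    rcases (mem_psel.1 hp).2 with h | h | ⟨h, hpT⟩
    · have := P3.mem_verts.1 (P3.mem_verts_of_mem_edges (hgE p) hvf)
      rw [cls1_iff] at h
      rcases this with rfl | rfl | rfl <;> tauto
    · simp only [hg, if_pos h] at hvf
      exact not_covered_of_mem_oppEdge h hvf hv
    · have h2 : ¬ cls2 M p := by
        rw [cls3_iff, cls4_iff] at h
        rw [cls2_iff]
        tauto
      simp only [hg, if_neg h2] at hvf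
      rw [eq_partner hM (isMiddle_of_cls3_or_cls4 h (heavy_mem_edges w p)) heM
        ⟨v, hve, hvf⟩] at hpT
      exact heT hpT
  have hmatch := (hM.subset Finset.sdiff_subset).union
    (hSd.isMatching_image fun p _ => hgE p) hd
  have hdisj : Disjoint (M \ T) (S.image g) := by
    rw [Finset.disjoint_left]
    intro e he he'
    induction e using Sym2.ind with
    | _ a b => exact hd _ he _ he' a (Sym2.mem_mk_left a b) (Sym2.mem_mk_left a b)
  have hle := hN.ew_le hw hmatch (by have := hmatch.two_mul_card_le; omega)
  have h1 : ew w (M \ T ∪ S.image g) = ew w (M \ T) + ew w (S.image g) :=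
    Finset.sum_union hdisj
  have h2 : ew w (M \ T) + ew w T = ew w M := Finset.sum_sdiff hT
  rw [hSd.ew_image fun p _ => hgE p, hS, sum_psel_or, sum_psel_or] at h1
  · have e1 : ∑ p ∈ psel P (cls1 M), w (g p) = ∑ p ∈ psel P (cls1 M), w (heavy w p) := by
      refine Finset.sum_congr rfl fun p hp => ?_
      have h := (mem_psel.1 hp).2
      rw [cls1_iff] at h
      simp only [hg, cls2_iff]
      rw [if_neg (by tauto)]
    have e2 : ∑ p ∈ psel P (cls2 M), w (g p) = ∑ p ∈ psel P (cls2 M), w (oppEdge M p) := by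
      refine Finset.sum_congr rfl fun p hp => ?_
      simp only [hg, if_pos (mem_psel.1 hp).2]
    have e3 : ∑ p ∈ psel P (fun p => (cls3 M p ∨ cls4 M p) ∧ partner M (heavy w p) ∈ T),
        w (g p) = ∑ p ∈ psel P (fun p => (cls3 M p ∨ cls4 M p) ∧ partner M (heavy w p) ∈ T),
        w (heavy w p) := by
      refine Finset.sum_congr rfl fun p hp => ?_
      have h := (mem_psel.1 hp).2.1
      rw [cls3_iff, cls4_iff] at h
      simp only [hg, cls2_iff]
      rw [if_neg (by tauto)]
    linarith
  · intro p
    rw [cls2_iff, cls3_iff, cls4_iff]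
    tauto
  · intro p
    rw [cls1_iff, cls2_iff, cls3_iff, cls4_iff]
    tauto

/-- The paths of class 6 whose middle edge meets `e`. -/
noncomputable def fib6 (P : Finset (P3 V)) (M : Finset (Sym2 V)) (e : Sym2 V) : Finset (P3 V) :=
  (psel P (cls6 M)).filter fun p => partner M (oppEdge M p) = e

/-- The paths of classes 3 and 4 whose heavy edge meets `e`. -/
noncomputable def fib34 (w : Sym2 V → ℝ) (P : Finset (P3 V)) (M : Finset (Sym2 V)) (e : Sym2 V) :
    Finset (P3 V) :=
  (psel P fun p => cls3 M p ∨ cls4 M p).filter fun p => partner M (heavy w p) = e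

section Fibers

variable {w : Sym2 V → ℝ} {P : Finset (P3 V)} {M : Finset (Sym2 V)} {e : Sym2 V} {p : P3 V}

theorem mem_fib6 : p ∈ fib6 P M e ↔ p ∈ P ∧ cls6 M p ∧ partner M (oppEdge M p) = e := by
  simp [fib6, psel, and_assoc]

theorem mem_fib34 :
    p ∈ fib34 w P M e ↔ p ∈ P ∧ (cls3 M p ∨ cls4 M p) ∧ partner M (heavy w p) = e := by
  simp [fib34, psel, and_assoc]

theorem shares_of_mem_fib6 (h : p ∈ fib6 P M e) : shares e (oppEdge M p) := by
  obtain ⟨-, h6, rfl⟩ := mem_fib6.1 h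
  exact (partner_mem (isMiddle_oppEdge h6)).2

theorem shares_of_mem_fib34 (h : p ∈ fib34 w P M e) : shares e (heavy w p) := by
  obtain ⟨-, h34, rfl⟩ := mem_fib34.1 h
  exact (partner_mem (isMiddle_of_cls3_or_cls4 h34 (heavy_mem_edges w p))).2

theorem middleIn_P234_of_mem_fib34 (h : p ∈ fib34 w P M e) :
    middleIn M (P234 P M) (heavy w p) := by
  obtain ⟨hp, h34, -⟩ := mem_fib34.1 h
  refine ⟨⟨p, mem_psel.2 ⟨hp, Or.inr h34⟩, heavy_mem_edges w p⟩, ?_⟩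
  exact isMiddle_of_cls3_or_cls4 h34 (heavy_mem_edges w p)

theorem card_mid6_filter (hP : PairwiseDisj P) (hM : IsMatching M) (he : e ∈ M) :
    ((mid6 P M).filter fun g => shares e g).card = (fib6 P M e).card := by
  have h : (mid6 P M).filter (fun g => shares e g) = (fib6 P M e).image (oppEdge M) := by
    ext g
    simp only [Finset.mem_filter, mid6, Esub, Finset.mem_biUnion, Finset.mem_image]
    constructor
    · rintro ⟨⟨⟨p, hp, hgp⟩, hg⟩, hs⟩
      obtain ⟨hpP, h6⟩ := mem_psel.1 hp
      rw [isMiddle_iff_eq_oppEdge h6 hgp] at hg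
      subst hg
      exact ⟨p, mem_fib6.2 ⟨hpP, h6, eq_partner hM (isMiddle_oppEdge h6) he hs⟩, rfl⟩
    · rintro ⟨p, hp, rfl⟩
      obtain ⟨hpP, h6, -⟩ := mem_fib6.1 hp
      exact ⟨⟨⟨p, mem_psel.2 ⟨hpP, h6⟩, oppEdge_mem_edges M p⟩, isMiddle_oppEdge h6⟩,
        shares_of_mem_fib6 hp⟩
  rw [h, Finset.card_image_of_injOn]
  exact (hP.subset fun p hp => (mem_fib6.1 hp).1).injOn fun p _ => oppEdge_mem_edges M p

theorem card_fib6_add_card_fib34_le (hP : PairwiseDisj P) :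
    (fib6 P M e).card + (fib34 w P M e).card ≤ 2 := by
  rw [← Finset.card_union_of_disjoint]
  · refine PairwiseDisj.card_le_two (e := e) (hP.subset ?_) ?_
    · intro p hp
      rcases Finset.mem_union.1 hp with h | h
      exacts [(mem_fib6.1 h).1, (mem_fib34.1 h).1]
    · intro p hp
      rcases Finset.mem_union.1 hp with h | h
      · obtain ⟨v, hve, hv⟩ := shares_of_mem_fib6 h
        exact ⟨v, P3.mem_verts_of_mem_edges (oppEdge_mem_edges M p) hv, hve⟩
      · obtain ⟨v, hve, hv⟩ := shares_of_mem_fib34 h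
        exact ⟨v, P3.mem_verts_of_mem_edges (heavy_mem_edges w p) hv, hve⟩
  · rw [Finset.disjoint_left]
    intro p h h'
    have h1 := (mem_fib6.1 h).2.1
    have h2 := (mem_fib34.1 h').2.1
    rw [cls6_iff] at h1
    rw [cls3_iff, cls4_iff] at h2
    tauto

theorem mem_Mset1 (he : e ∈ M) (hp : p ∈ fib6 P M e) : e ∈ Mset1 P M := by
  obtain ⟨hpP, h6, -⟩ := mem_fib6.1 hp
  exact Finset.mem_filter.2 ⟨he, oppEdge M p, ⟨⟨p, mem_psel.2 ⟨hpP, h6⟩,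
    oppEdge_mem_edges M p⟩, isMiddle_oppEdge h6⟩, shares_of_mem_fib6 hp⟩

theorem covered_of_isMiddle (he : e ∈ p.edges) (hm : isMiddle M e)
    (h : ¬ (cls2 M p ∨ cls3 M p ∨ cls4 M p)) :
    covered M p.y ∧
      (covered M p.x ∧ ¬ covered M p.z ∨ ¬ covered M p.x ∧ covered M p.z) := by
  rw [cls2_iff, cls3_iff, cls4_iff] at h
  rcases P3.mem_edges.1 he with rfl | rfl <;> rw [isMiddle_mk] at hm <;>
    by_cases hx : covered M p.x <;> by_cases hy : covered M p.y <;>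
    by_cases hz : covered M p.z <;> simp_all

theorem mem_Mset2 (hP : PairwiseDisj P) (hM : IsMatching M) (he : e ∈ M)
    (hp : p ∈ fib34 w P M e) (h6 : fib6 P M e = ∅) : e ∈ Mset2 P M := by
  have hmid := middleIn_P234_of_mem_fib34 hp
  obtain ⟨hpP, hp34, -⟩ := mem_fib34.1 hp
  refine Finset.mem_filter.2 ⟨he, ⟨heavy w p, ⟨⟨p, hpP, heavy_mem_edges w p⟩, hmid.2⟩,
    shares_of_mem_fib34 hp⟩, ?_⟩
  rintro g ⟨⟨q, hqP, hgq⟩, hg⟩ hs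
  refine ⟨⟨q, mem_psel.2 ⟨hqP, ?_⟩, hgq⟩, hg⟩
  have hn6 : ¬ cls6 M q := by
    intro hq6
    have hgo := (isMiddle_iff_eq_oppEdge hq6 hgq).1 hg
    subst hgo
    have : q ∈ fib6 P M e := mem_fib6.2 ⟨hqP, hq6, eq_partner hM hg he hs⟩
    simp [h6] at this
  by_contra hcls
  obtain ⟨hy, hxz⟩ := covered_of_isMiddle hgq hg hcls
  rw [cls6_iff] at hn6
  obtain ⟨f, hfM, hfq⟩ : ∃ f ∈ M, f ∈ q.edges := by
    by_contra! h
    refine hn6 ⟨hy, hxz, fun h' => h _ h' ?_, fun h' => h _ h' ?_⟩ <;>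
      rw [P3.mem_edges] <;> simp
  have hyf : q.y ∈ f := by
    rcases P3.mem_edges.1 hfq with rfl | rfl <;> simp
  have hye : q.y ∈ e := by
    obtain ⟨v, hve, hvg⟩ := hs
    have hv : covered M v := ⟨e, he, hve⟩
    rcases P3.mem_edges.1 hgq with rfl | rfl <;> rw [isMiddle_mk] at hg <;>
      rcases Sym2.mem_iff.1 hvg with rfl | rfl <;> first | exact hve | tauto
  have hef : f = e := hM.eq_of_mem hfM he hyf hye
  subst hef
  obtain ⟨v, hve, hv⟩ := shares_of_mem_fib34 hp
  have hpq : p = q := hP.eq_of_mem hpP hqP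
    (P3.mem_verts_of_mem_edges (heavy_mem_edges w p) hv) (P3.mem_verts_of_mem_edges hfq hve)
  subst hpq
  rw [cls3_iff, cls4_iff] at hp34
  tauto

/-- The contribution of the sets `M_1'`, `M_1''`, `M_1'''`, `M_2` at a single edge of `M`. -/
theorem fiber_bound (hw : ∀ e, 0 ≤ w e) (hP : PairwiseDisj P) {k : ℕ}
    (hM : IsMaxMatchingOfSize w k M) (he : e ∈ M) :
    (1 / 12 : ℝ) * ∑ p ∈ fib6 P M e, w (oppEdge M p) +
      (1 / 6 : ℝ) * min (∑ p ∈ fib34 w P M e, w (heavy w p)) (w e) ≤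
      (1 / 12 : ℝ) * (if e ∈ Mset1' P M then w e else 0) +
      (1 / 6 : ℝ) * (if e ∈ Mset1'' P M then w e else 0) +
      (1 / 4 : ℝ) * (if e ∈ Mset1''' P M then w e else 0) +
      (1 / 6 : ℝ) * (if e ∈ Mset2 P M then w e else 0) := by
  have hwe := hw e
  have hcard := card_fib6_add_card_fib34_le (w := w) (M := M) (e := e) hP
  have hmid := card_mid6_filter hP hM.1 he
  have h6 : ∑ p ∈ fib6 P M e, w (oppEdge M p) ≤ (fib6 P M e).card * w e := by
    rw [← nsmul_eq_mul]
    refine Finset.sum_le_card_nsmul _ _ _ fun p hp => ?_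
    exact hM.le_of_shares he (isMiddle_oppEdge (mem_fib6.1 hp).2.1) (shares_of_mem_fib6 hp)
  have hnn : ∀ (s : Finset (Sym2 V)), 0 ≤ if e ∈ s then w e else 0 := by
    intro s
    split_ifs
    exacts [hwe, le_rfl]
  have n1 := hnn (Mset1' P M)
  have n2 := hnn (Mset1'' P M)
  have n3 := hnn (Mset1''' P M)
  have n4 := hnn (Mset2 P M)
  have hmin := min_le_right (∑ p ∈ fib34 w P M e, w (heavy w p)) (w e)
  rcases Finset.eq_empty_or_nonempty (fib34 w P M e) with h34 | ⟨q, hq⟩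
  · have h0 : min (∑ p ∈ fib34 w P M e, w (heavy w p)) (w e) = 0 := by
      rw [h34, Finset.sum_empty, min_eq_left hwe]
    rw [h0]
    rcases Finset.eq_empty_or_nonempty (fib6 P M e) with hf6 | ⟨p, hp⟩
    · rw [hf6, Finset.sum_empty]
      linarith
    · have hm1 := mem_Mset1 he hp
      have hpos : 0 < (fib6 P M e).card := Finset.card_pos.2 ⟨p, hp⟩
      have h12 : (fib6 P M e).card = 1 ∨ (fib6 P M e).card = 2 := by omega
      rcases h12 with h1 | h2
      · rw [h1] at h6 hmid
        push_cast at h6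
        by_cases hex : ∃ g, middleIn M (P234 P M) g ∧ shares e g
        · have hm : e ∈ Mset1''' P M := Finset.mem_filter.2 ⟨hm1, hmid, hex⟩
          rw [if_pos hm] at n3 ⊢
          linarith
        · have hm : e ∈ Mset1' P M :=
            Finset.mem_filter.2 ⟨hm1, hmid, fun g hg hs => hex ⟨g, hg, hs⟩⟩
          rw [if_pos hm] at n1 ⊢
          linarith
      · rw [h2] at h6 hmid
        push_cast at h6
        have hm : e ∈ Mset1'' P M := Finset.mem_filter.2 ⟨hm1, hmid⟩
        rw [if_pos hm] at n2 ⊢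
        linarith
  · have hpos : 0 < (fib34 w P M e).card := Finset.card_pos.2 ⟨q, hq⟩
    rcases Finset.eq_empty_or_nonempty (fib6 P M e) with hf6 | ⟨p, hp⟩
    · have hm := mem_Mset2 hP hM.1 he hq hf6
      rw [hf6, Finset.sum_empty]
      rw [if_pos hm] at n4 ⊢
      linarith
    · have hpos' : 0 < (fib6 P M e).card := Finset.card_pos.2 ⟨p, hp⟩
      have h1 : (fib6 P M e).card = 1 := by omega
      rw [h1] at h6 hmid
      push_cast at h6
      have hm : e ∈ Mset1''' P M := Finset.mem_filter.2 ⟨mem_Mset1 he hp, hmid,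
        heavy w q, middleIn_P234_of_mem_fib34 hq, shares_of_mem_fib34 hq⟩
      rw [if_pos hm] at n3 ⊢
      linarith

theorem ew_eq_sum_ite {F : Finset (Sym2 V)} (h : F ⊆ M) (w : Sym2 V → ℝ) :
    ew w F = ∑ e ∈ M, if e ∈ F then w e else 0 := by
  rw [Finset.sum_ite_mem, Finset.inter_eq_right.2 h]
  rfl

/-- The joint gain of the exchange argument for `N` and the sets `M_1'`, `M_1''`, `M_1'''`,
`M_2`. -/
theorem exchange_bound (hw : ∀ e, 0 ≤ w e) (hP : PairwiseDisj P) {k : ℕ}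
    (hM : IsMaxMatchingOfSize w k M) {N : Finset (Sym2 V)}
    (hN : IsMaxMatchingOfSize w (Fintype.card V / 2) N) :
    ∃ δ : ℝ, 0 ≤ δ ∧
      ew w M + ∑ p ∈ psel P (cls1 M), w (heavy w p) +
        ∑ p ∈ psel P (cls2 M), w (oppEdge M p) + δ ≤ ew w N ∧
      (1 / 12 : ℝ) * ∑ p ∈ psel P (cls6 M), w (oppEdge M p) +
        (1 / 6 : ℝ) * (∑ p ∈ psel P (cls3 M), w (heavy w p) +
          ∑ p ∈ psel P (cls4 M), w (heavy w p)) ≤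
        (1 / 12 : ℝ) * ew w (Mset1' P M) + (1 / 6 : ℝ) * ew w (Mset1'' P M) +
        (1 / 4 : ℝ) * ew w (Mset1''' P M) + (1 / 6 : ℝ) * ew w (Mset2 P M) +
        (1 / 6 : ℝ) * δ := by
  set D : Sym2 V → ℝ := fun e => ∑ p ∈ fib34 w P M e, w (heavy w p) with hD
  set T := M.filter fun e => w e < D e with hT
  have hN' := le_ew_of_isMaxMatchingOfSize hw hP hM.1 (Finset.filter_subset _ _ : T ⊆ M) hN
  have hTsum : ∑ p ∈ psel P (fun p => (cls3 M p ∨ cls4 M p) ∧ partner M (heavy w p) ∈ T),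
      w (heavy w p) = ∑ e ∈ T, D e := by
    rw [← Finset.sum_fiberwise_of_maps_to (t := T) (g := fun p => partner M (heavy w p))
      (fun p hp => (mem_psel.1 hp).2.2)]
    refine Finset.sum_congr rfl fun e he => Finset.sum_congr ?_ fun _ _ => rfl
    ext p
    simp only [mem_fib34, mem_psel, Finset.mem_filter]
    constructor
    · rintro ⟨⟨h1, h2, -⟩, h3⟩
      exact ⟨h1, h2, h3⟩
    · rintro ⟨h1, h2, h3⟩
      exact ⟨⟨h1, h2, h3 ▸ he⟩, h3⟩
  have hDsum : ∑ p ∈ psel P (cls3 M), w (heavy w p) + ∑ p ∈ psel P (cls4 M), w (heavy w p) =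
      ∑ e ∈ M, D e := by
    rw [← sum_psel_or (c := cls3 M) (d := cls4 M)
      (fun p => by rw [cls3_iff, cls4_iff]; tauto) (fun p => w (heavy w p))]
    refine (Finset.sum_fiberwise_of_maps_to (t := M) (g := fun p => partner M (heavy w p))
      (fun p hp => ?_) _).symm
    exact (partner_mem (isMiddle_of_cls3_or_cls4 (mem_psel.1 hp).2 (heavy_mem_edges w p))).1
  have h6sum : ∑ p ∈ psel P (cls6 M), w (oppEdge M p) =
      ∑ e ∈ M, ∑ p ∈ fib6 P M e, w (oppEdge M p) := by
    refine (Finset.sum_fiberwise_of_maps_to (t := M) (g := fun p => partner M (oppEdge M p))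
      (fun p hp => ?_) _).symm
    exact (partner_mem (isMiddle_oppEdge (mem_psel.1 hp).2)).1
  have hmin : ∑ e ∈ M, min (D e) (w e) + ∑ e ∈ T, (D e - w e) = ∑ e ∈ M, D e := by
    rw [hT, Finset.sum_filter, ← Finset.sum_add_distrib]
    refine Finset.sum_congr rfl fun e _ => ?_
    split_ifs with h
    · rw [min_eq_right h.le]
      ring
    · rw [min_eq_left (not_lt.1 h), add_zero]
  refine ⟨∑ e ∈ T, (D e - w e), Finset.sum_nonneg fun e he => ?_, ?_, ?_⟩
  · exact sub_nonneg.2 (Finset.mem_filter.1 he).2.le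
  · rw [Finset.sum_sub_distrib]
    unfold ew at hN' ⊢
    linarith
  · have hsum := Finset.sum_le_sum fun e he => fiber_bound hw hP hM (e := e) he
    simp only [Finset.sum_add_distrib, ← Finset.mul_sum] at hsum
    have s0 : Mset1 P M ⊆ M := Finset.filter_subset _ _
    have s1 : Mset1' P M ⊆ M := (Finset.filter_subset _ _).trans s0
    have s2 : Mset1'' P M ⊆ M := (Finset.filter_subset _ _).trans s0
    have s3 : Mset1''' P M ⊆ M := (Finset.filter_subset _ _).trans s0
    have s4 : Mset2 P M ⊆ M := Finset.filter_subset _ _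
    rw [← ew_eq_sum_ite s1, ← ew_eq_sum_ite s2, ← ew_eq_sum_ite s3, ← ew_eq_sum_ite s4,
      ← h6sum] at hsum
    rw [hDsum, ← hmin]
    linarith

end Fibers

theorem ew_image_le_maxSum {Q : Finset (P3 V)} (hQ : PairwiseDisj Q) {g : P3 V → Sym2 V}
    (hg : ∀ p, g p ∈ p.edges) (w : Sym2 V → ℝ) :
    ew w (Q.image g) ≤ maxSum w Q ∧ pw w Q - ew w (Q.image g) ≤ maxSum w Q := by
  rw [hQ.ew_image fun p _ => hg p]
  refine ⟨Finset.sum_le_sum fun p _ => le_max_of_mem_edges w (hg p), ?_⟩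
  rw [pw, ← Finset.sum_sub_distrib]
  exact Finset.sum_le_sum fun p _ => wt_sub_le_max_of_mem_edges w (hg p)

theorem ew_image_heavy {Q : Finset (P3 V)} (hQ : PairwiseDisj Q) (w : Sym2 V → ℝ) :
    ew w (Q.image (heavy w)) = maxSum w Q := by
  rw [hQ.ew_image fun p _ => heavy_mem_edges w p]
  exact Finset.sum_congr rfl fun p _ => weight_heavy w p

theorem pw_le_two_mul_maxSum (w : Sym2 V → ℝ) (Q : Finset (P3 V)) :
    pw w Q ≤ 2 * maxSum w Q := by
  rw [pw, maxSum, Finset.mul_sum]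
  refine Finset.sum_le_sum fun p _ => ?_
  unfold P3.wt
  linarith [le_max_left (w s(p.x, p.y)) (w s(p.y, p.z)),
    le_max_right (w s(p.x, p.y)) (w s(p.y, p.z))]

theorem statement_18 (n : ℕ) (hn : Fintype.card V = n) (h3 : 3 ∣ n) (h2 : 2 ∣ n)
    (w : Sym2 V → ℝ) (hw : ∀ e : Sym2 V, 0 ≤ w e)
    (M : Finset (Sym2 V)) (hM : IsMaxMatchingOfSize w (n / 3) M)
    (N : Finset (Sym2 V)) (hN : IsMaxMatchingOfSize w (n / 2) N)
    (Pstar : Finset (P3 V)) (hP : IsMaxPacking w Pstar) (hAss : Ass Pstar M) :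
    (10 / 17 : ℝ) * pw w Pstar ≤
      max (max
        ((2 / 3 : ℝ) * ew w N + (1 / 2 : ℝ) * pw w Pstar - (1 / 2 : ℝ) * maxSum w Pstar)
        ((2 / 3 : ℝ) * ew w M + (1 / 12 : ℝ) * ew w (Mset1' Pstar M) +
          (1 / 6 : ℝ) * ew w (Mset1'' Pstar M) + (1 / 4 : ℝ) * ew w (Mset1''' Pstar M) +
          (1 / 6 : ℝ) * ew w (Mset2 Pstar M) + (1 / 4 : ℝ) * ew w (Mset3 Pstar M) +
          (1 / 3 : ℝ) * ew w (Mset4 Pstar M) + (1 / 2 : ℝ) * ew w (X2 Pstar M) +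
          (1 / 2 : ℝ) * ew w (X3 w Pstar M) + (1 / 2 : ℝ) * ew w (X4 w Pstar M) +
          ew w (X5 Pstar M) + (1 / 2 : ℝ) * ew w (X7 Pstar M) -
          (1 / 4 : ℝ) * ew w (Y7 Pstar M) +
          (1 / 4 : ℝ) * ew w (Esub (psel Pstar (cls6 M))) +
          (1 / 4 : ℝ) * ew w (Esub (psel Pstar (cls8 M)))))
        ((4 / 9 : ℝ) * (2 * ew w (Y5 Pstar M) + 2 * ew w (Y6 Pstar M) +
          ew w (Esub (psel Pstar (cls7 M))) + ew w (Esub (psel Pstar (cls8 M))) +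
          maxSum w (psel Pstar fun p => cls7 M p ∨ cls8 M p))) := by
  subst hn
  have hd : PairwiseDisj Pstar := hP.1.2.1
  have hMmax : maxSum w Pstar ≤ ew w M := by
    rw [← ew_image_heavy hd]
    refine hM.ew_le hw (hd.isMatching_image fun p _ => heavy_mem_edges w p) ?_
    exact Finset.card_image_le.trans hP.1.1.le
  obtain ⟨δ, hδ, hNle, hex⟩ := exchange_bound hw hd hM hN
  have hpw : pw w Pstar = _ := sum_eq_sum_classes hM.1 Pstar (P3.wt w)
  have hmx : maxSum w Pstar = _ := sum_eq_sum_classes hM.1 Pstar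
    (fun p => max (w s(p.x, p.y)) (w s(p.y, p.z)))
  have hmx78 : maxSum w (psel Pstar fun p => cls7 M p ∨ cls8 M p) =
      maxSum w (psel Pstar (cls7 M)) + maxSum w (psel Pstar (cls8 M)) :=
    sum_psel_or (fun p h7 h8 => by
      obtain ⟨-, h | h⟩ := h7
      exacts [h8.2.1 h.1, h8.2.2 h.2]) _
  have hX2 : ew w (X2 Pstar M) + ∑ p ∈ psel Pstar (cls2 M), w (oppEdge M p) =
      pw w (psel Pstar (cls2 M)) := by
    have h : ew w (X2 Pstar M) = ∑ p ∈ psel Pstar (cls2 M), w (endEdge M p) :=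
      (hd.psel _).ew_image (fun p _ => endEdge_mem_edges M p) w
    rw [h, ← Finset.sum_add_distrib]
    exact Finset.sum_congr rfl fun p _ => weight_endEdge_add w M p
  have hX2m : ew w (X2 Pstar M) ≤ _ ∧ pw w (psel Pstar (cls2 M)) - ew w (X2 Pstar M) ≤ _ :=
    ew_image_le_maxSum (hd.psel (cls2 M)) (endEdge_mem_edges M) w
  have hX3 : ew w (X3 w Pstar M) = _ := ew_image_heavy (hd.psel (cls3 M)) w
  have hX4 : ew w (X4 w Pstar M) = _ := ew_image_heavy (hd.psel (cls4 M)) w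
  have hX5 : ew w (X5 Pstar M) ≤ _ ∧ pw w (psel Pstar (cls5 M)) - ew w (X5 Pstar M) ≤ _ :=
    ew_image_le_maxSum (hd.psel (cls5 M)) (edgeOut_mem_edges M) w
  have hX6 : ew w (X6 Pstar M) ≤ _ ∧ pw w (psel Pstar (cls6 M)) - ew w (X6 Pstar M) ≤ _ :=
    ew_image_le_maxSum (hd.psel (cls6 M)) (oppEdge_mem_edges M) w
  have hX6s : ew w (X6 Pstar M) = _ :=
    (hd.psel (cls6 M)).ew_image (fun p _ => oppEdge_mem_edges M p) w
  have hX7 : ew w (X7 Pstar M) ≤ _ ∧ pw w (psel Pstar (cls7 M)) - ew w (X7 Pstar M) ≤ _ :=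
    ew_image_le_maxSum (hd.psel (cls7 M)) (edgeOut_mem_edges M) w
  have hY5 : ew w (Y5 Pstar M) + ew w (X5 Pstar M) = _ :=
    (hd.psel (cls5 M)).ew_Esub_sdiff (fun p _ => edgeOut_mem_edges M p) w
  have hY6 : ew w (Y6 Pstar M) + ew w (X6 Pstar M) = _ :=
    (hd.psel (cls6 M)).ew_Esub_sdiff (fun p _ => oppEdge_mem_edges M p) w
  have hY7 : ew w (Y7 Pstar M) + ew w (X7 Pstar M) = _ :=
    (hd.psel (cls7 M)).ew_Esub_sdiff (fun p _ => edgeOut_mem_edges M p) w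
  have hM3 : ew w (Y7 Pstar M) ≤ ew w (Mset3 Pstar M) :=
    Finset.sum_le_sum_of_subset_of_nonneg
      (Esub_sdiff_subset fun p hp => (mem_psel.1 hp).2.2) fun e _ _ => hw e
  have hM4 : ew w (Y5 Pstar M) ≤ ew w (Mset4 Pstar M) :=
    Finset.sum_le_sum_of_subset_of_nonneg
      (Esub_sdiff_subset fun p hp => (mem_psel.1 hp).2.2.2) fun e _ _ => hw e
  have hE6 := (hd.psel (cls6 M)).ew_Esub w
  have hE7 := (hd.psel (cls7 M)).ew_Esub w
  have hE8 := (hd.psel (cls8 M)).ew_Esub w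
  have h1 := pw_le_two_mul_maxSum w (psel Pstar (cls1 M))
  have h3' := pw_le_two_mul_maxSum w (psel Pstar (cls3 M))
  have h4' := pw_le_two_mul_maxSum w (psel Pstar (cls4 M))
  have h8 := pw_le_two_mul_maxSum w (psel Pstar (cls8 M))
  have hnn : ∀ F, 0 ≤ ew w F := fun F => Finset.sum_nonneg fun e _ => hw e
  have n2 := hnn (X2 Pstar M)
  have n5 := hnn (X5 Pstar M)
  have n6 := hnn (X6 Pstar M)
  have n7 := hnn (X7 Pstar M)
  have m5 := hnn (Y5 Pstar M)
  have m6 := hnn (Y6 Pstar M)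
  have m7 := hnn (Y7 Pstar M)
  have hm1 : ∑ p ∈ psel Pstar (cls1 M), w (heavy w p) = maxSum w (psel Pstar (cls1 M)) :=
    Finset.sum_congr rfl fun p _ => weight_heavy w p
  have hm3 : ∑ p ∈ psel Pstar (cls3 M), w (heavy w p) = maxSum w (psel Pstar (cls3 M)) :=
    Finset.sum_congr rfl fun p _ => weight_heavy w p
  have hm4 : ∑ p ∈ psel Pstar (cls4 M), w (heavy w p) = maxSum w (psel Pstar (cls4 M)) :=
    Finset.sum_congr rfl fun p _ => weight_heavy w p
  simp only [← maxSum.eq_def, ← pw.eq_def] at hpw hmx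
  rw [hm1] at hNle
  rw [hm3, hm4] at hex
  rw [hX3, hX4, hE6, hE7, hE8, hmx78]
  by_contra! hlt
  obtain ⟨hlt, hB3⟩ := max_lt_iff.1 hlt
  obtain ⟨hB1, hB2⟩ := max_lt_iff.1 hlt
  linarith

end MW3PP
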